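/- Let k ≥ 1. For every f ∈ ℱ^{01}, I^R_k(β_{k+1}(f)) = {i + k : i ∈ I^L_k(f)}. Moreover, for every f ∈ ℬ_{k+1}, I^L_k(∂(f)) = {i − k : i ∈ I^R_k(f)}. -/

import Mathlib

/-!
The greedy sets are determined by a non-recursive description. A set `S` of positive support points
of `f` with pairwise gaps at least `k` equals `I^L_k(f)` exactly when every positive support point
`p` satisfies `i ≤ p < i + k` for some `i ∈ S`, and it equals `I^R_k(f)` exactly when every such `p`
satisfies `i - k < p ≤ i` for some `i ∈ S`.
The greedy scans have these properties (`isLeftScan_IL`, `isRightScan_IR`), and at most one set has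
them (`IsLeftScan.unique`, `IsRightScan.unique`).

Translating `S = I^L_k(f)` by `k` preserves gaps, and the translate lies in the support of
`β_{k+1}(f)`. A support point `p` of `β_{k+1}(f)` outside the translate is a point of the support of
`f` not in `S`, because `f` takes values in `{0, 1}`; hence `i < p < i + k` for some `i ∈ S`, and
`i + k` covers `p` from the right. So the translate is the right scan of `β_{k+1}(f)`. The argument
for `∂` is the mirror image; membership in `ℬ_{k+1}` says that all elements of `I^R_k(f)` exceed
`k`, so that the translate by `-k` stays within the positive integers.
-/

noncomputable section
open scoped Classical

/-- `ℱ`: frequency lists, i.e. finitely supported functions on the positive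
integers (extended by `f 0 = 0`). -/
def Freq : Set (ℕ → ℕ) := {f | f 0 = 0 ∧ (Function.support f).Finite}

/-- The largest index in the support of `f` (junk value for infinite support). -/
def topBound (f : ℕ → ℕ) : ℕ := sSup {i | f i ≠ 0}

/-- Greedy left-to-right scan with the given fuel: repeatedly select the least
index `i ≥ lb` with `f i ≠ 0` and continue from `i + k`. -/
def ILaux (k : ℕ) (f : ℕ → ℕ) : ℕ → ℕ → Set ℕ
  | 0, _ => ∅
  | fuel + 1, lb =>
    let i := sInf {j | lb ≤ j ∧ f j ≠ 0}
    if i = 0 then ∅ else insert i (ILaux k f fuel (i + k))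

/-- `I^L_k(f)`: the greedily chosen left endpoints of forward clusters. -/
def IL (k : ℕ) (f : ℕ → ℕ) : Set ℕ := ILaux k f (topBound f + 1) 1

/-- Greedy right-to-left scan with the given fuel: repeatedly select the
greatest index `i` with `1 ≤ i ≤ b` and `f i ≠ 0`, continuing from `i - k`. -/
def IRaux (k : ℕ) (f : ℕ → ℕ) : ℕ → ℕ → Set ℕ
  | 0, _ => ∅
  | fuel + 1, b =>
    let i := sSup {j | 1 ≤ j ∧ j ≤ b ∧ f j ≠ 0}
    if i = 0 then ∅ else insert i (IRaux k f fuel (i - k))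

/-- `I^R_k(f)`: the greedily chosen right endpoints of backward clusters. -/
def IR (k : ℕ) (f : ℕ → ℕ) : Set ℕ := IRaux k f (topBound f + 1) (topBound f)

/-- The `k`-measure of a frequency list: the largest cardinality of a set of
positive indices in the support of `f` that pairwise differ by at least `k`. -/
def kmeasureF (k : ℕ) (f : ℕ → ℕ) : ℕ :=
  sSup {m | ∃ I : Finset ℕ, I.card = m ∧ (∀ i ∈ I, 1 ≤ i ∧ f i ≠ 0) ∧
    ∀ i ∈ I, ∀ j ∈ I, i < j → i + k ≤ j}

/-- The size `|f| = Σ i·f(i)` of the partition with frequency list `f`. -/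
def wt (f : ℕ → ℕ) : ℕ := ∑ i ∈ Finset.range (topBound f + 1), i * f i


/-- `ℱ^{01}`: finitely supported `{0,1}`-valued functions on the positive
integers (frequency lists of partitions with distinct parts). -/
def Freq01 : Set (ℕ → ℕ) := {f | f 0 = 0 ∧ (∀ i, f i ≤ 1) ∧ (Function.support f).Finite}

/-- The map `∂` (for the `β`-encoding, with ambient parameter `k`): for every
`i ∈ I^R_k(f)`, decrease the value at `i` by one and, when `i - k ≥ 1`,
increase the value at `i - k` by one. -/
def dmap01 (k : ℕ) (f : ℕ → ℕ) : ℕ → ℕ := fun p =>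
  f p - (if p ∈ IR k f then 1 else 0) +
    (if 1 ≤ p ∧ p + k ∈ IR k f then 1 else 0)

/-- The map `β_{k+1}`: for every `i ∈ I^L_k(f)`, decrease the value at `i` by
one and increase the value at `i + k` by one. -/
def betaTop (k : ℕ) (f : ℕ → ℕ) : ℕ → ℕ := fun p =>
  f p - (if p ∈ IL k f then 1 else 0) +
    (if ∃ i ∈ IL k f, p = i + k then 1 else 0)

/-- The map `β_j` for `1 ≤ j ≤ k + 1` (ambient parameter `k`): for `j = k + 1`
it is `betaTop`; for `j ≤ k` it fixes values at indices `< j` and on indices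
`j - 1 + i` (`i ≥ 1`) acts as `β_{k+1}` applied to the shifted tail
`t ↦ f (j - 1 + t)` with the resulting value at `1` increased by one. -/
def betaMap (k j : ℕ) (f : ℕ → ℕ) : ℕ → ℕ :=
  if j = k + 1 then betaTop k f
  else fun p =>
    if p < j then f p
    else betaTop k (fun t => f (j - 1 + t)) (p - (j - 1)) + (if p = j then 1 else 0)

/-- The class `ℬ_j` (ambient parameter `k`): for `1 ≤ j ≤ k` it consists of the
`f ∈ ℱ^{01}` with `min I^R_k(f) = j`; `ℬ_{k+1}` is the complement in `ℱ^{01}`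
of the others. -/
def Bset (k j : ℕ) : Set (ℕ → ℕ) :=
  if j = k + 1 then
    Freq01 \ ⋃ j' ∈ Finset.Icc 1 k, {f ∈ Freq01 | IsLeast (IR k f) j'}
  else {f ∈ Freq01 | IsLeast (IR k f) j}

/-! ### Non-recursive description of the greedy sets -/

/-- The non-recursive description of the left-to-right greedy set: `S` consists of positive support
points of `f` with gaps at least `k`, and the windows `[i, i + k)`, `i ∈ S`, cover the positive
support. -/
structure IsLeftScan (k : ℕ) (f : ℕ → ℕ) (S : Set ℕ) : Prop where
  supp : ∀ i ∈ S, 1 ≤ i ∧ f i ≠ 0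
  gap : ∀ i ∈ S, ∀ j ∈ S, i < j → i + k ≤ j
  cover : ∀ p, 1 ≤ p → f p ≠ 0 → ∃ i ∈ S, i ≤ p ∧ p < i + k

/-- The non-recursive description of the right-to-left greedy set: as in `IsLeftScan`, but with
the windows `(i - k, i]`, written without subtraction. -/
structure IsRightScan (k : ℕ) (f : ℕ → ℕ) (S : Set ℕ) : Prop where
  supp : ∀ i ∈ S, 1 ≤ i ∧ f i ≠ 0
  gap : ∀ i ∈ S, ∀ j ∈ S, i < j → i + k ≤ j
  cover : ∀ p, 1 ≤ p → f p ≠ 0 → ∃ i ∈ S, p ≤ i ∧ i < p + k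

theorem IsLeftScan.finite {k : ℕ} {f : ℕ → ℕ} {S : Set ℕ} (h : IsLeftScan k f S)
    (hf : (Function.support f).Finite) : S.Finite :=
  hf.subset fun i hi => (h.supp i hi).2

theorem IsRightScan.finite {k : ℕ} {f : ℕ → ℕ} {S : Set ℕ} (h : IsRightScan k f S)
    (hf : (Function.support f).Finite) : S.Finite :=
  hf.subset fun i hi => (h.supp i hi).2

/-- Whether `p` belongs to a left scan is decided by `f p` and the smaller elements of the scan. -/
theorem IsLeftScan.mem_iff {k : ℕ} {f : ℕ → ℕ} {S : Set ℕ} (h : IsLeftScan k f S) (p : ℕ) :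
    p ∈ S ↔ (1 ≤ p ∧ f p ≠ 0) ∧ ∀ i < p, i ∈ S → i + k ≤ p := by
  refine ⟨fun hp => ⟨h.supp p hp, fun i hi hS => h.gap i hS p hp hi⟩, fun ⟨⟨h1, h2⟩, h3⟩ => ?_⟩
  obtain ⟨i, hi, hip, hpi⟩ := h.cover p h1 h2
  rcases hip.eq_or_lt with rfl | hlt
  · exact hi
  · have := h3 i hlt hi
    omega

/-- Whether `p` belongs to a right scan is decided by `f p` and the larger elements of the scan. -/
theorem IsRightScan.mem_iff {k : ℕ} {f : ℕ → ℕ} {S : Set ℕ} (h : IsRightScan k f S) (p : ℕ) :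
    p ∈ S ↔ (1 ≤ p ∧ f p ≠ 0) ∧ ∀ i > p, i ∈ S → p + k ≤ i := by
  refine ⟨fun hp => ⟨h.supp p hp, fun i hi hS => h.gap p hp i hS hi⟩, fun ⟨⟨h1, h2⟩, h3⟩ => ?_⟩
  obtain ⟨i, hi, hip, hpi⟩ := h.cover p h1 h2
  rcases hip.eq_or_lt with rfl | hlt
  · exact hi
  · have := h3 i hlt hi
    omega

theorem IsLeftScan.unique {k : ℕ} {f : ℕ → ℕ} {S T : Set ℕ} (hS : IsLeftScan k f S)
    (hT : IsLeftScan k f T) : S = T := by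
  ext p
  induction p using Nat.strong_induction_on with
  | _ p ih =>
    rw [hS.mem_iff, hT.mem_iff]
    exact and_congr_right fun _ => forall₂_congr fun i hi => by rw [ih i hi]

theorem IsRightScan.unique {k : ℕ} {f : ℕ → ℕ} {S T : Set ℕ} (hS : IsRightScan k f S)
    (hf : (Function.support f).Finite) (hT : IsRightScan k f T) : S = T := by
  obtain ⟨N, hN⟩ := hf.bddAbove
  -- Descending induction from a bound `N` of the support.
  have key : ∀ d p, N < p + d → (p ∈ S ↔ p ∈ T) := by
    intro d
    induction d with
    | zero =>
      intro p hp
      have h0 : ¬ f p ≠ 0 := fun h => by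
        have := hN (Function.mem_support.2 h)
        omega
      exact ⟨fun h => (h0 (hS.supp p h).2).elim, fun h => (h0 (hT.supp p h).2).elim⟩
    | succ d ih =>
      intro p hp
      rw [hS.mem_iff, hT.mem_iff]
      exact and_congr_right fun _ => forall₂_congr fun i hi => by rw [ih i (by omega)]
  ext p
  exact key (N + 1) p (by omega)

/-! ### Correctness of the greedy scans -/

/-- The left scan from `lb` is correct once the fuel reaches past every support point: each step
uses one unit of fuel and raises `lb` by at least `k ≥ 1`. -/
theorem ILaux_spec {k : ℕ} (hk : 1 ≤ k) (f : ℕ → ℕ) (fuel lb : ℕ) (hlb : 1 ≤ lb)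
    (hb : ∀ p, f p ≠ 0 → p < fuel + lb) :
    (∀ i ∈ ILaux k f fuel lb, lb ≤ i ∧ f i ≠ 0) ∧
    (∀ i ∈ ILaux k f fuel lb, ∀ j ∈ ILaux k f fuel lb, i < j → i + k ≤ j) ∧
    (∀ p, lb ≤ p → f p ≠ 0 → ∃ i ∈ ILaux k f fuel lb, i ≤ p ∧ p < i + k) := by
  induction fuel generalizing lb with
  | zero =>
    refine ⟨by simp [ILaux], by simp [ILaux], fun p hp h => ?_⟩
    have := hb p h
    omega
  | succ fuel ih =>
    by_cases hne : {j | lb ≤ j ∧ f j ≠ 0}.Nonempty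
    · obtain ⟨i, hi⟩ : ∃ i, sInf {j | lb ≤ j ∧ f j ≠ 0} = i := ⟨_, rfl⟩
      have hmem : lb ≤ i ∧ f i ≠ 0 := hi ▸ Nat.sInf_mem hne
      have hmin : ∀ p, lb ≤ p → f p ≠ 0 → i ≤ p := fun p h1 h2 => hi ▸ Nat.sInf_le ⟨h1, h2⟩
      have hrec : ILaux k f (fuel + 1) lb = insert i (ILaux k f fuel (i + k)) := by
        simp only [ILaux, hi]
        exact if_neg (by omega)
      obtain ⟨h1, h2, h3⟩ := ih (i + k) (by omega) (fun p hp => by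
        have := hb p hp
        omega)
      rw [hrec]
      refine ⟨?_, ?_, ?_⟩
      · rintro j (rfl | hj)
        · exact hmem
        · exact ⟨by have := (h1 j hj).1; omega, (h1 j hj).2⟩
      · rintro a (rfl | ha) b (rfl | hb') hab
        · omega
        · exact (h1 b hb').1
        · have := (h1 a ha).1
          omega
        · exact h2 a ha b hb' hab
      · intro p hp hfp
        by_cases hlt : p < i + k
        · exact ⟨i, Set.mem_insert _ _, hmin p hp hfp, hlt⟩
        · obtain ⟨j, hj, h⟩ := h3 p (by omega) hfp
          exact ⟨j, Set.mem_insert_of_mem _ hj, h⟩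
    · -- `sInf ∅ = 0`, which is the stopping signal of the scan.
      have hrec : ILaux k f (fuel + 1) lb = ∅ := by
        simp only [ILaux, Set.not_nonempty_iff_eq_empty.1 hne, Nat.sInf_empty, if_true]
      rw [hrec]
      exact ⟨by simp, by simp, fun p hp hfp => (hne ⟨p, hp, hfp⟩).elim⟩

/-- The right scan from `b` is correct once the fuel is at least `b`. -/
theorem IRaux_spec {k : ℕ} (hk : 1 ≤ k) (f : ℕ → ℕ) (fuel b : ℕ) (hb : b ≤ fuel) :
    (∀ i ∈ IRaux k f fuel b, (1 ≤ i ∧ i ≤ b) ∧ f i ≠ 0) ∧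
    (∀ i ∈ IRaux k f fuel b, ∀ j ∈ IRaux k f fuel b, i < j → i + k ≤ j) ∧
    (∀ p, 1 ≤ p → p ≤ b → f p ≠ 0 → ∃ i ∈ IRaux k f fuel b, p ≤ i ∧ i < p + k) := by
  induction fuel generalizing b with
  | zero =>
    refine ⟨by simp [IRaux], by simp [IRaux], fun p hp h => ?_⟩
    omega
  | succ fuel ih =>
    by_cases hne : {j | 1 ≤ j ∧ j ≤ b ∧ f j ≠ 0}.Nonempty
    · obtain ⟨i, hi⟩ : ∃ i, sSup {j | 1 ≤ j ∧ j ≤ b ∧ f j ≠ 0} = i := ⟨_, rfl⟩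
      have hbdd : BddAbove {j | 1 ≤ j ∧ j ≤ b ∧ f j ≠ 0} := ⟨b, fun j hj => hj.2.1⟩
      have hmem : 1 ≤ i ∧ i ≤ b ∧ f i ≠ 0 := hi ▸ Nat.sSup_mem hne hbdd
      have hmax : ∀ p, 1 ≤ p → p ≤ b → f p ≠ 0 → p ≤ i :=
        fun p h1 h2 h3 => hi ▸ le_csSup hbdd ⟨h1, h2, h3⟩
      have hrec : IRaux k f (fuel + 1) b = insert i (IRaux k f fuel (i - k)) := by
        simp only [IRaux, hi]
        exact if_neg (by omega)
      obtain ⟨h1, h2, h3⟩ := ih (i - k) (by omega)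
      rw [hrec]
      refine ⟨?_, ?_, ?_⟩
      · rintro j (rfl | hj)
        · exact ⟨⟨hmem.1, hmem.2.1⟩, hmem.2.2⟩
        · have := (h1 j hj).1
          exact ⟨by omega, (h1 j hj).2⟩
      · rintro a (rfl | ha) c (rfl | hc) hac
        · omega
        · have := (h1 c hc).1
          omega
        · have := (h1 a ha).1
          omega
        · exact h2 a ha c hc hac
      · intro p hp hpb hfp
        by_cases hlt : i < p + k
        · exact ⟨i, Set.mem_insert _ _, hmax p hp hpb hfp, hlt⟩
        · obtain ⟨j, hj, h⟩ := h3 p hp (by omega) hfp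
          exact ⟨j, Set.mem_insert_of_mem _ hj, h⟩
    · -- `sSup ∅ = 0`, which is the stopping signal of the scan.
      have hrec : IRaux k f (fuel + 1) b = ∅ := by
        simp only [IRaux, Set.not_nonempty_iff_eq_empty.1 hne, csSup_empty, bot_eq_zero, if_true]
      rw [hrec]
      exact ⟨by simp, by simp, fun p hp hpb hfp => (hne ⟨p, hp, hpb, hfp⟩).elim⟩

theorem le_topBound {f : ℕ → ℕ} (hf : (Function.support f).Finite) {p : ℕ} (hp : f p ≠ 0) :
    p ≤ topBound f :=
  le_csSup hf.bddAbove hp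

theorem isLeftScan_IL {k : ℕ} (hk : 1 ≤ k) {f : ℕ → ℕ} (hf : (Function.support f).Finite) :
    IsLeftScan k f (IL k f) := by
  obtain ⟨h1, h2, h3⟩ := ILaux_spec hk f (topBound f + 1) 1 le_rfl fun p hp => by
    have := le_topBound hf hp
    omega
  exact ⟨h1, h2, h3⟩

theorem isRightScan_IR {k : ℕ} (hk : 1 ≤ k) {f : ℕ → ℕ} (hf : (Function.support f).Finite) :
    IsRightScan k f (IR k f) := by
  obtain ⟨h1, h2, h3⟩ := IRaux_spec hk f (topBound f + 1) (topBound f) (Nat.le_succ _)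
  exact ⟨fun i hi => ⟨(h1 i hi).1.1, (h1 i hi).2⟩, h2,
    fun p hp hfp => h3 p hp (le_topBound hf hfp) hfp⟩

/-! ### Translating the scans -/

theorem statement19 (k : ℕ) (hk : 1 ≤ k) :
    (∀ f ∈ Freq01, IR k (betaTop k f) = (fun i => i + k) '' IL k f) ∧
    (∀ f ∈ Bset k (k + 1), IL k (dmap01 k f) = (fun i => i - k) '' IR k f) := by
  refine ⟨fun f hf => ?_, fun f hf => ?_⟩
  · obtain ⟨-, hf1, hfin⟩ := hf
    have hL := isLeftScan_IL hk hfin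
    have hfin' : (Function.support (betaTop k f)).Finite := by
      refine (hfin.union ((hL.finite hfin).image (fun i => i + k))).subset fun p hp => ?_
      simp only [Function.mem_support, betaTop, Set.mem_union, Set.mem_image] at hp ⊢
      by_contra! h
      have h2 : ¬ ∃ i ∈ IL k f, p = i + k := fun ⟨i, hi, e⟩ => h.2 i hi e.symm
      simp [h.1, h2] at hp
    refine (isRightScan_IR hk hfin').unique hfin' ⟨?_, ?_, ?_⟩
    · rintro _ ⟨i, hi, rfl⟩
      have h : ∃ j ∈ IL k f, i + k = j + k := ⟨i, hi, rfl⟩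
      exact ⟨by have := (hL.supp i hi).1; dsimp only; omega, by simp only [betaTop, if_pos h]; omega⟩
    · rintro _ ⟨i, hi, rfl⟩ _ ⟨j, hj, rfl⟩ hij
      have := hL.gap i hi j hj
      dsimp only at hij ⊢
      omega
    · intro p hp hgp
      by_cases hT : ∃ i ∈ IL k f, p = i + k
      · obtain ⟨i, hi, rfl⟩ := hT
        exact ⟨i + k, ⟨i, hi, rfl⟩, le_rfl, by omega⟩
      · -- The values of `f` are at most one, so a surviving point was not selected.
        have hpS : p ∉ IL k f := by
          intro h
          have := hf1 p
          simp only [betaTop, if_pos h, if_neg hT] at hgp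
          omega
        simp only [betaTop, if_neg hpS, if_neg hT] at hgp
        obtain ⟨i, hi, h1, h2⟩ := hL.cover p hp (by simpa using hgp)
        have hne : i ≠ p := fun e => hpS (e ▸ hi)
        exact ⟨i + k, ⟨i, hi, rfl⟩, by omega, by omega⟩
  · simp only [Bset, if_true] at hf
    obtain ⟨hF, hnot⟩ := hf
    have hF' := hF
    obtain ⟨-, hf1, hfin⟩ := hF'
    have hR := isRightScan_IR hk hfin
    have hbig : ∀ i ∈ IR k f, k < i := by
      intro i hi
      by_contra! hle
      have hm : sInf (IR k f) ∈ IR k f := Nat.sInf_mem ⟨i, hi⟩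
      have hmi : sInf (IR k f) ≤ i := Nat.sInf_le hi
      refine hnot (Set.mem_iUnion₂.2 ⟨sInf (IR k f), ?_, hF, hm, fun j hj => Nat.sInf_le hj⟩)
      exact Finset.mem_Icc.2 ⟨(hR.supp _ hm).1, hmi.trans hle⟩
    have hfin' : (Function.support (dmap01 k f)).Finite := by
      refine (hfin.union ((hR.finite hfin).image (fun i => i - k))).subset fun p hp => ?_
      simp only [Function.mem_support, dmap01, Set.mem_union, Set.mem_image] at hp ⊢
      by_contra! h
      have h2 : ¬ (1 ≤ p ∧ p + k ∈ IR k f) := fun ⟨_, hi⟩ => h.2 _ hi (by omega)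
      simp only [h.1, if_neg h2] at hp
      omega
    refine (isLeftScan_IL hk hfin').unique ⟨?_, ?_, ?_⟩
    · rintro _ ⟨i, hi, rfl⟩
      have := hbig i hi
      have h : 1 ≤ i - k ∧ i - k + k ∈ IR k f :=
        ⟨by omega, by rwa [Nat.sub_add_cancel this.le]⟩
      refine ⟨h.1, ?_⟩
      simp only [dmap01, if_pos h]
      omega
    · rintro _ ⟨i, hi, rfl⟩ _ ⟨j, hj, rfl⟩ hij
      have := hR.gap i hi j hj
      have := hbig i hi
      dsimp only at hij ⊢
      omega
    · intro p hp hgp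
      by_cases hT : p + k ∈ IR k f
      · exact ⟨p, ⟨p + k, hT, by simp⟩, le_rfl, by omega⟩
      · have hT' : ¬ (1 ≤ p ∧ p + k ∈ IR k f) := fun h => hT h.2
        have hpS : p ∉ IR k f := by
          intro h
          have := hf1 p
          simp only [dmap01, if_pos h, if_neg hT'] at hgp
          omega
        simp only [dmap01, if_neg hpS, if_neg hT'] at hgp
        obtain ⟨i, hi, h1, h2⟩ := hR.cover p hp (by simpa using hgp)
        have hne : i ≠ p := fun e => hpS (e ▸ hi)
        have := hbig i hi
        exact ⟨i - k, ⟨i, hi, rfl⟩, by omega, by omega⟩
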